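/- arXiv:1906.00578 — 4 statements merged into one kernel-verified Lean document; each statement's English description precedes it below -/
import Mathlib

section
/- Let G=(V,E) be Γ-symmetric with respect to θ:Γ→Aut(G), let τ:Γ→O(d) be a homomorphism with augmented representation τ̃, and let I⊆V be a union of vertex orbits under θ. For q:V→ℝ^{d+1}, define ι∘q by (ι∘q)_i=−q_i if i∈I and (ι∘q)_i=q_i otherwise. Then (G,p) is a Γ-symmetric spherical framework on S^d (with respect to θ and τ̃) if and only if (G,ι∘p) is; moreover, (G,p) is forced Γ-symmetric infinitesimally rigid if and only if (G,ι∘p) is forced Γ-symmetric infinitesimally rigid. -/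
/-!
Inversion multiplies the point at each vertex by a sign `s i = ±1`, and `s` is constant on vertex
orbits. The map `u ↦ s • u` on assignments `V → ℝ^{d+1}` is a linear involution. It preserves
unit lengths and spans, it commutes with the group action because `s` is invariant, it carries
motions of `p` to motions of `s • p` because the edge condition at `{i, j}` is bilinear and merely
gets multiplied by `s i * s j`, and it carries `S p` to `S (s • p)` for every matrix `S`, hence
trivial motions to trivial motions. Since the map is an involution, each implication yields its
converse.
-/

open Matrix

namespace RigidityPaper

variable {V : Type*}

/-! ### Spherical frameworks on `S^{n-1} ⊆ ℝ^n` -/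

/-- A spherical framework: all points on the unit sphere, linearly spanning the ambient space. -/
def IsSphFw {n : ℕ} (p : V → Fin n → ℝ) : Prop :=
  (∀ i, p i ⬝ᵥ p i = 1) ∧ Submodule.span ℝ (Set.range p) = ⊤

/-- An infinitesimal motion of a spherical framework. -/
def SphMotion {n : ℕ} (G : SimpleGraph V) (p q : V → Fin n → ℝ) : Prop :=
  (∀ i j, G.Adj i j → p i ⬝ᵥ q j + p j ⬝ᵥ q i = 0) ∧ ∀ i, p i ⬝ᵥ q i = 0

/-- A trivial infinitesimal motion of a spherical framework. -/
def SphTrivial {n : ℕ} (p q : V → Fin n → ℝ) : Prop :=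
  ∃ S : Matrix (Fin n) (Fin n) ℝ, Sᵀ = -S ∧ ∀ i, q i = S *ᵥ p i

/-- Infinitesimal rigidity of a spherical framework. -/
def SphRigid {n : ℕ} (G : SimpleGraph V) (p : V → Fin n → ℝ) : Prop :=
  ∀ q, SphMotion G p q → SphTrivial p q

/-- Forced symmetric infinitesimal rigidity of a spherical framework, where `sym` is
the symmetry (equivariance) condition on infinitesimal motions. -/
def SphForcedRigid {n : ℕ} (G : SimpleGraph V) (sym : (V → Fin n → ℝ) → Prop)
    (p : V → Fin n → ℝ) : Prop :=
  ∀ q, SphMotion G p q → sym q → SphTrivial p q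

/-- The set of infinitesimal motions of a spherical framework, i.e. the kernel of the
spherical rigidity matrix. -/
def SphMotionSet {n : ℕ} (G : SimpleGraph V) (p : V → Fin n → ℝ) :
    Set (V → Fin n → ℝ) := {q | SphMotion G p q}

/-! ### Bar-joint frameworks in `ℝ^d` -/

/-- An infinitesimal motion of a bar-joint framework. -/
def BJMotion {d : ℕ} (G : SimpleGraph V) (p u : V → Fin d → ℝ) : Prop :=
  ∀ i j, G.Adj i j → (p i - p j) ⬝ᵥ (u i - u j) = 0

/-- A trivial infinitesimal motion of a bar-joint framework. -/
def BJTrivial {d : ℕ} (p u : V → Fin d → ℝ) : Prop :=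
  ∃ (S : Matrix (Fin d) (Fin d) ℝ) (t : Fin d → ℝ), Sᵀ = -S ∧ ∀ i, u i = S *ᵥ p i + t

/-- Infinitesimal rigidity of a bar-joint framework. -/
def BJRigid {d : ℕ} (G : SimpleGraph V) (p : V → Fin d → ℝ) : Prop :=
  ∀ u, BJMotion G p u → BJTrivial p u

/-- Forced symmetric infinitesimal rigidity of a bar-joint framework. -/
def BJForcedRigid {d : ℕ} (G : SimpleGraph V) (sym : (V → Fin d → ℝ) → Prop)
    (p : V → Fin d → ℝ) : Prop :=
  ∀ u, BJMotion G p u → sym u → BJTrivial p u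

/-- The set of infinitesimal motions of a bar-joint framework, i.e. the kernel of the
rigidity matrix. -/
def BJMotionSet {d : ℕ} (G : SimpleGraph V) (p : V → Fin d → ℝ) :
    Set (V → Fin d → ℝ) := {u | BJMotion G p u}

/-! ### Symmetry -/

/-- `p` is equivariant with respect to the vertex permutation `σ` and the matrix `A`. -/
def MatEquiv {n : ℕ} (σ : Equiv.Perm V) (A : Matrix (Fin n) (Fin n) ℝ)
    (p : V → Fin n → ℝ) : Prop :=
  ∀ i, A *ᵥ p i = p (σ i)

/-- `σ` is an automorphism of the graph `G`. -/
def IsGraphAut (G : SimpleGraph V) (σ : Equiv.Perm V) : Prop :=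
  ∀ i j, G.Adj (σ i) (σ j) ↔ G.Adj i j

/-- The augmented matrix `diag(A, 1)` of size `(d+1) × (d+1)`. -/
def aug {d : ℕ} (A : Matrix (Fin d) (Fin d) ℝ) :
    Matrix (Fin (d + 1)) (Fin (d + 1)) ℝ :=
  Matrix.of fun i j =>
    if h : (i : ℕ) < d then
      (if h' : (j : ℕ) < d then A ⟨i.1, h⟩ ⟨j.1, h'⟩ else 0)
    else (if (j : ℕ) < d then 0 else 1)

/-- Extend a vector of `ℝ^d` to `ℝ^{d+1}` by appending a last coordinate. -/
def extVec {d : ℕ} (x : Fin d → ℝ) (t : ℝ) : Fin (d + 1) → ℝ := Fin.snoc x t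

/-- A point of `S^d ⊆ ℝ^{d+1}` lies on the equator: its last coordinate vanishes. -/
def OnEquator {d : ℕ} (x : Fin (d + 1) → ℝ) : Prop := x (Fin.last d) = 0

/-- `A` is the reflection in the linear hyperplane with unit normal `ν`. -/
def IsReflection {d : ℕ} (A : Matrix (Fin d) (Fin d) ℝ) (ν : Fin d → ℝ) : Prop :=
  ν ⬝ᵥ ν = 1 ∧ ∀ x, A *ᵥ x = x - (2 * (ν ⬝ᵥ x)) • ν

/-- `A` is the rotation of `ℝ³` by `π` about the line through the origin with unit
direction `u`. -/
def IsHalfTurn3 (A : Matrix (Fin 3) (Fin 3) ℝ) (u : Fin 3 → ℝ) : Prop :=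
  u ⬝ᵥ u = 1 ∧ ∀ x, A *ᵥ x = (2 * (u ⬝ᵥ x)) • u - x

/-! ### Point-hyperplane frameworks in `ℝ^d`

A point-hyperplane framework on a PH-graph with hyperplane vertex set `VH` is given by
`p` (points, relevant on `VHᶜ`), `a` (unit normals of hyperplanes, relevant on `VH`) and
`r` (offsets of hyperplanes, relevant on `VH`); vertex `j ∈ VH` represents the hyperplane
`{x | a j ⬝ᵥ x + r j = 0}`. -/

/-- Point-hyperplane framework: unit normals, and the points together with the
hyperplanes affinely span `ℝ^d`. -/
def IsPHFw {d : ℕ} (VH : Set V) (p a : V → Fin d → ℝ) (r : V → ℝ) : Prop :=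
  (∀ j ∈ VH, a j ⬝ᵥ a j = 1) ∧
  affineSpan ℝ ((p '' VHᶜ) ∪ ⋃ j ∈ VH, {x | a j ⬝ᵥ x + r j = 0}) = ⊤

/-- An infinitesimal motion `(p', a', r')` of the point-hyperplane framework
`(G, VH, p, a, r)`. -/
def PHMotion {d : ℕ} (G : SimpleGraph V) (VH : Set V) (p a : V → Fin d → ℝ)
    (r : V → ℝ) (p' a' : V → Fin d → ℝ) (r' : V → ℝ) : Prop :=
  (∀ i j, G.Adj i j → i ∉ VH → j ∉ VH → (p i - p j) ⬝ᵥ (p' i - p' j) = 0) ∧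
  (∀ i j, G.Adj i j → i ∉ VH → j ∈ VH → p i ⬝ᵥ a' j + p' i ⬝ᵥ a j + r' j = 0) ∧
  (∀ i j, G.Adj i j → i ∈ VH → j ∈ VH → a i ⬝ᵥ a' j + a' i ⬝ᵥ a j = 0) ∧
  (∀ i ∈ VH, a i ⬝ᵥ a' i = 0)

/-- The space of infinitesimal motions of a point-hyperplane framework (the components
that do not correspond to unknowns of the rigidity matrix are normalised to zero). -/
def PHMotionSet {d : ℕ} (G : SimpleGraph V) (VH : Set V) (p a : V → Fin d → ℝ)
    (r : V → ℝ) : Set ((V → Fin d → ℝ) × (V → Fin d → ℝ) × (V → ℝ)) :=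
  {m | PHMotion G VH p a r m.1 m.2.1 m.2.2 ∧ (∀ i ∈ VH, m.1 i = 0) ∧
    ∀ i, i ∉ VH → m.2.1 i = 0 ∧ m.2.2 i = 0}

/-- The dimension of (the span of) a subset of a real vector space; for a linear
subspace this is just its dimension. -/
noncomputable def setDim {W : Type*} [AddCommGroup W] [Module ℝ W] (s : Set W) : ℕ :=
  Module.finrank ℝ (Submodule.span ℝ s)

/-- Infinitesimal rigidity of a point-hyperplane framework in `ℝ^d`: the space of
infinitesimal motions has dimension `(d+1).choose 2`. -/
def PHRigid {d : ℕ} (G : SimpleGraph V) (VH : Set V) (p a : V → Fin d → ℝ)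
    (r : V → ℝ) : Prop :=
  setDim (PHMotionSet G VH p a r) = Nat.choose (d + 1) 2

/-- A trivial infinitesimal motion of a point-hyperplane framework: one that extends to
(i.e. is) an infinitesimal motion of the framework on the complete PH-graph on the same
points and hyperplanes. -/
def PHTrivial {d : ℕ} (VH : Set V) (p a : V → Fin d → ℝ) (r : V → ℝ)
    (p' a' : V → Fin d → ℝ) (r' : V → ℝ) : Prop :=
  PHMotion (⊤ : SimpleGraph V) VH p a r p' a' r'

/-- Forced symmetric infinitesimal rigidity of a point-hyperplane framework. -/
def PHForcedRigid {d : ℕ} (G : SimpleGraph V) (VH : Set V) (p a : V → Fin d → ℝ)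
    (r : V → ℝ)
    (sym : (V → Fin d → ℝ) → (V → Fin d → ℝ) → (V → ℝ) → Prop) : Prop :=
  ∀ p' a' r', PHMotion G VH p a r p' a' r' → sym p' a' r' →
    PHTrivial VH p a r p' a' r'

/-- Equivariance of a point-hyperplane configuration with respect to a vertex
permutation `σ` and a matrix `A` (normals equivariant up to sign, offsets invariant). -/
def PHEquiv {d : ℕ} (σ : Equiv.Perm V) (A : Matrix (Fin d) (Fin d) ℝ) (VH : Set V)
    (p a : V → Fin d → ℝ) (r : V → ℝ) : Prop :=
  (∀ i, i ∉ VH → A *ᵥ p i = p (σ i)) ∧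
  (∀ j ∈ VH, A *ᵥ a j = a (σ j) ∨ A *ᵥ a j = -a (σ j)) ∧
  ∀ j ∈ VH, r j = r (σ j)

/-- Equivariance of an infinitesimal motion of a point-hyperplane framework with
normals `a`, with respect to `σ` and `A` (the sign matching that of the normals). -/
def PHMotionEquiv {d : ℕ} (σ : Equiv.Perm V) (A : Matrix (Fin d) (Fin d) ℝ)
    (VH : Set V) (a : V → Fin d → ℝ)
    (p' a' : V → Fin d → ℝ) (r' : V → ℝ) : Prop :=
  (∀ i, i ∉ VH → A *ᵥ p' i = p' (σ i)) ∧
  (∀ j ∈ VH, (A *ᵥ a j = a (σ j) → A *ᵥ a' j = a' (σ j)) ∧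
    (A *ᵥ a j = -a (σ j) → A *ᵥ a' j = -a' (σ j))) ∧
  ∀ j ∈ VH, r' j = r' (σ j)

/-! ### Regularity: maximal rank of the rigidity matrix among symmetric realisations,
equivalently minimal dimension of the space of infinitesimal motions. -/

/-- A spherical realisation is regular with respect to the class of realisations cut
out by `sym` if its rigidity matrix has maximal rank there, equivalently its motion
space has minimal dimension. -/
def SphRegularWrt {n : ℕ} (G : SimpleGraph V) (sym : (V → Fin n → ℝ) → Prop)
    (p : V → Fin n → ℝ) : Prop :=
  IsSphFw p ∧ sym p ∧
  ∀ q : V → Fin n → ℝ, IsSphFw q → sym q →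
    setDim (SphMotionSet G p) ≤ setDim (SphMotionSet G q)

/-- Regularity of a bar-joint realisation with respect to the class `sym`. -/
def BJRegularWrt {d : ℕ} (G : SimpleGraph V) (sym : (V → Fin d → ℝ) → Prop)
    (p : V → Fin d → ℝ) : Prop :=
  sym p ∧ ∀ q : V → Fin d → ℝ, sym q →
    setDim (BJMotionSet G p) ≤ setDim (BJMotionSet G q)

/-- Regularity of a point-hyperplane realisation with respect to the class `sym`. -/
def PHRegularWrt {d : ℕ} (G : SimpleGraph V) (VH : Set V)
    (sym : (V → Fin d → ℝ) → (V → Fin d → ℝ) → (V → ℝ) → Prop)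
    (p a : V → Fin d → ℝ) (r : V → ℝ) : Prop :=
  IsPHFw VH p a r ∧ sym p a r ∧
  ∀ (q b : V → Fin d → ℝ) (s : V → ℝ), IsPHFw VH q b s → sym q b s →
    setDim (PHMotionSet G VH p a r) ≤ setDim (PHMotionSet G VH q b s)

/-! ### Isostatic frameworks -/

/-- An isostatic bar-joint framework: infinitesimally rigid, and deleting any edge
destroys infinitesimal rigidity. -/
def BJIsostatic {d : ℕ} (G : SimpleGraph V) (p : V → Fin d → ℝ) : Prop :=
  BJRigid G p ∧ ∀ e ∈ G.edgeSet, ¬ BJRigid (G.deleteEdges {e}) p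

/-- An isostatic point-hyperplane framework. -/
def PHIsostatic {d : ℕ} (G : SimpleGraph V) (VH : Set V) (p a : V → Fin d → ℝ)
    (r : V → ℝ) : Prop :=
  PHRigid G VH p a r ∧ ∀ e ∈ G.edgeSet, ¬ PHRigid (G.deleteEdges {e}) VH p a r

/-! ### Counts for Laman-type theorems -/

/-- `(2,3)`-tightness of a graph. -/
def TwoThreeTight (G : SimpleGraph V) : Prop :=
  G.edgeSet.ncard + 3 = 2 * Nat.card V ∧
  ∀ F ⊆ G.edgeSet, F.Nonempty →
    F.ncard + 3 ≤ 2 * {v : V | ∃ e ∈ F, v ∈ e}.ncard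

/-! ### Quotient `ℤ₂`-gain graphs

For a free involution `σ` of `G` with a transversal `V₀` of the vertex orbits, the
quotient `ℤ₂`-gain graph has vertex set `V₀` and, since `ℤ₂`-gains are involutive,
its edges may be recorded as pairs `(s(i,j), α)` with `i, j ∈ V₀` and `α ∈ ZMod 2`:
gain `0` for the orbit of an edge `{i, j}` of `G`, and gain `1` for the orbit of an
edge `{i, σ j}`. -/

/-- `e` is an edge of the quotient `ℤ₂`-gain graph of `(G, σ)` with transversal `V₀`. -/
def GainEdge (G : SimpleGraph V) (σ : Equiv.Perm V) (V₀ : Set V)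
    (e : Sym2 V × ZMod 2) : Prop :=
  ∃ i j, i ∈ V₀ ∧ j ∈ V₀ ∧ e.1 = s(i, j) ∧
    ((e.2 = 0 ∧ G.Adj i j) ∨ (e.2 = 1 ∧ G.Adj i (σ j)))

/-- The vertices spanned by a set of gain edges. -/
def vsupp (F : Set (Sym2 V × ZMod 2)) : Set V := {v | ∃ e ∈ F, v ∈ e.1}

/-- A closed walk in a set `F` of `ℤ₂`-gain edges: a nonempty list of steps, each step
`(u, v, α)` traversing the edge `(s(u,v), α) ∈ F`, consecutive steps chained, returning
to the start. -/
def IsClosedWalk (F : Set (Sym2 V × ZMod 2)) (w : List (V × V × ZMod 2)) : Prop :=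
  w ≠ [] ∧ (∀ st ∈ w, (s(st.1, st.2.1), st.2.2) ∈ F) ∧
  List.Chain' (fun st₁ st₂ => st₁.2.1 = st₂.1) w ∧
  w.getLast?.map (fun st => st.2.1) = w.head?.map (fun st => st.1)

/-- A set of `ℤ₂`-gain edges is balanced if every closed walk has trivial gain. -/
def GainBalanced (F : Set (Sym2 V × ZMod 2)) : Prop :=
  ∀ w, IsClosedWalk F w → (w.map fun st => st.2.2).sum = 0

/-- `(2,3,m)`-gain-sparsity of a set of `ℤ₂`-gain edges. -/
def GainSparse (m : ℕ) (Es : Set (Sym2 V × ZMod 2)) : Prop :=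
  (∀ F ⊆ Es, F.Nonempty → GainBalanced F →
    F.ncard + 3 ≤ 2 * (vsupp F).ncard) ∧
  ∀ F ⊆ Es, F.Nonempty → F.ncard + m ≤ 2 * (vsupp F).ncard

/-- The quotient `ℤ₂`-gain graph of `(G, σ)` (with transversal `V₀`) contains a
spanning `(2,3,m)`-gain-tight subgraph. -/
def HasSpanningGainTight (G : SimpleGraph V) (σ : Equiv.Perm V) (V₀ : Set V)
    (m : ℕ) : Prop :=
  ∃ H : Set (Sym2 V × ZMod 2), (∀ e ∈ H, GainEdge G σ V₀ e) ∧
    GainSparse m H ∧ H.ncard + m = 2 * V₀.ncard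

/-- If `s` takes the values `±1`, then `s • p` spans whenever `p` does and has unit points
whenever `p` has. -/
lemma IsSphFw.sign_smul {n : ℕ} {p : V → Fin n → ℝ} (s : V → ℝ) (hs : ∀ i, s i * s i = 1)
    (h : IsSphFw p) : IsSphFw fun i => s i • p i := by
  refine ⟨fun i => ?_, ?_⟩
  · simp only [smul_dotProduct, dotProduct_smul, smul_eq_mul, h.1 i]
    linear_combination hs i
  · rw [eq_top_iff, ← h.2, Submodule.span_le]
    rintro _ ⟨i, rfl⟩
    have hi : p i = s i • (s i • p i) := by rw [smul_smul, hs, one_smul]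
    rw [hi]
    exact Submodule.smul_mem _ _ (Submodule.subset_span ⟨i, rfl⟩)

lemma MatEquiv.sign_smul {n : ℕ} {σ : Equiv.Perm V} {A : Matrix (Fin n) (Fin n) ℝ}
    {p : V → Fin n → ℝ} (s : V → ℝ) (hσ : ∀ i, s (σ i) = s i) (h : MatEquiv σ A p) :
    MatEquiv σ A fun i => s i • p i := fun i => by
  simp only [mulVec_smul, h i, hσ i]

/-- The motion condition at an edge `{i, j}` is multiplied by `s i * s j` when both the
framework and the motion are multiplied by `s`. -/
lemma SphMotion.sign_smul {n : ℕ} {G : SimpleGraph V} {p u : V → Fin n → ℝ} (s : V → ℝ)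
    (h : SphMotion G p u) : SphMotion G (fun i => s i • p i) fun i => s i • u i := by
  refine ⟨fun i j hij => ?_, fun i => ?_⟩
  · simp only [smul_dotProduct, dotProduct_smul, smul_eq_mul]
    linear_combination s i * s j * h.1 i j hij
  · simp [h.2 i]

lemma SphTrivial.sign_smul {n : ℕ} {p u : V → Fin n → ℝ} (s : V → ℝ) (h : SphTrivial p u) :
    SphTrivial (fun i => s i • p i) fun i => s i • u i := by
  obtain ⟨S, hS, hu⟩ := h
  exact ⟨S, hS, fun i => by simp only [hu i, mulVec_smul]⟩

/-- Forced symmetric rigidity passes from `p` to `s • p`: a motion `u` of `s • p` yields the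
motion `s • u` of `s • (s • p) = p`. -/
lemma SphForcedRigid.sign_smul {n : ℕ} {G : SimpleGraph V} {sym : (V → Fin n → ℝ) → Prop}
    {p : V → Fin n → ℝ} (s : V → ℝ) (hs : ∀ i, s i * s i = 1)
    (hsym : ∀ u, sym u → sym fun i => s i • u i) (h : SphForcedRigid G sym p) :
    SphForcedRigid G sym fun i => s i • p i := by
  intro u hu hu'
  have hm := hu.sign_smul s
  simp only [smul_smul, hs, one_smul] at hm
  have ht := (h _ hm (hsym u hu')).sign_smul s
  simpa only [smul_smul, hs, one_smul] using ht

/-- inverting the points of a `θ`-invariant set `I` of vertices preserves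
`Γ`-symmetry of spherical frameworks and forced `Γ`-symmetric infinitesimal rigidity. -/
theorem statement_5 {V : Type*} [Fintype V] {Γ : Type*} [Group Γ]
    (G : SimpleGraph V) {d : ℕ}
    (θ : Γ →* Equiv.Perm V) (hθ : ∀ γ, IsGraphAut G (θ γ))
    (τ : Γ →* Matrix (Fin d) (Fin d) ℝ) (hτ : ∀ γ, (τ γ)ᵀ * τ γ = 1)
    (I : Set V) (hI : ∀ γ, ∀ i ∈ I, θ γ i ∈ I)
    (p q : V → Fin (d + 1) → ℝ)
    (hq : ∀ i : V, (i ∈ I → q i = -p i) ∧ (i ∉ I → q i = p i)) :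
    ((IsSphFw p ∧ ∀ γ, MatEquiv (θ γ) (aug (τ γ)) p) ↔
      (IsSphFw q ∧ ∀ γ, MatEquiv (θ γ) (aug (τ γ)) q)) ∧
    (SphForcedRigid G (fun u => ∀ γ, MatEquiv (θ γ) (aug (τ γ)) u) p ↔
      SphForcedRigid G (fun u => ∀ γ, MatEquiv (θ γ) (aug (τ γ)) u) q) := by
  classical
  obtain ⟨s, hsI, hsI'⟩ : ∃ s : V → ℝ, (∀ i ∈ I, s i = -1) ∧ ∀ i ∉ I, s i = 1 :=
    ⟨fun i => if i ∈ I then -1 else 1, fun i hi => by simp [hi], fun i hi => by simp [hi]⟩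
  have hs : ∀ i, s i * s i = 1 := fun i => by
    by_cases hi : i ∈ I
    · simp [hsI i hi]
    · simp [hsI' i hi]
  have hσ : ∀ γ i, s (θ γ i) = s i := fun γ i => by
    by_cases hi : i ∈ I
    · rw [hsI _ (hI γ i hi), hsI i hi]
    · -- The complement of `I` is invariant too, since `γ⁻¹` maps `I` into `I`.
      have hi' : θ γ i ∉ I := fun h => hi (by simpa using hI γ⁻¹ _ h)
      rw [hsI' _ hi', hsI' i hi]
  have hqp : q = fun i => s i • p i := funext fun i => by
    by_cases hi : i ∈ I
    · simp [(hq i).1 hi, hsI i hi]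
    · simp [(hq i).2 hi, hsI' i hi]
  have hpq : p = fun i => s i • q i := by
    simp only [hqp, smul_smul, hs, one_smul]
  have hsym : ∀ u : V → Fin (d + 1) → ℝ, (∀ γ, MatEquiv (θ γ) (aug (τ γ)) u) →
      ∀ γ, MatEquiv (θ γ) (aug (τ γ)) fun i => s i • u i :=
    fun u hu γ => (hu γ).sign_smul s (hσ γ)
  refine ⟨⟨fun h => ?_, fun h => ?_⟩, fun h => ?_, fun h => ?_⟩
  · rw [hqp]
    exact ⟨h.1.sign_smul s hs, hsym p h.2⟩
  · rw [hpq]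
    exact ⟨h.1.sign_smul s hs, hsym q h.2⟩
  · rw [hqp]
    exact h.sign_smul s hs hsym
  · rw [hpq]
    exact h.sign_smul s hs hsym

end RigidityPaper
end

section
/- Let G=(V,E) be a graph, let θ:ℤ₂→Aut(G) act freely on V, and let X⊆V be a (possibly empty) subset with θ(γ)(X)=X. Let τ:ℤ₂→O(3) send the non-trivial element to the reflection of ℝ³ in a plane through the origin, and let τ':ℤ₂→O(3) send the non-trivial element to the rotation of ℝ³ by π about a line through the origin. Then G can be realised as an infinitesimally rigid ℤ₂-symmetric spherical framework on S² with respect to θ and τ, with the points assigned to X lying on a great circle, if and only if G can be realised as an infinitesimally rigid ℤ₂-symmetric spherical framework on S² with respect to θ and τ', with the points assigned to X lying on a great circle. -/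
/-!
A half-turn about a line is the negative of the reflection in the orthogonal plane, and the sphere,
the great circles and infinitesimal rigidity are all insensitive to replacing individual points
`p i` by their antipodes. Since `σ` is a free involution, there is a sign `ε : V → {±1}` with
`ε (σ i) = -ε i` (`exists_sign`); replacing `p` by `ε i • p i` turns a framework that is
equivariant for a reflection into one that is equivariant for the half-turn about its normal,
and conversely. The two given axes `ν` and `u` are matched by a Householder reflection `Q` exchanging
them (`exists_swap`). The effect of `p ↦ ε i • Q (p i)` on frameworks is the content of `transfer`.
-/

open Matrix

namespace RigidityPaper

variable {V : Type*}

/-- A fixed-point-free involution reverses some function to `{1, -1}`: the function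
singles out one vertex in each orbit. -/
lemma exists_sign {V : Type*} [Fintype V] (σ : Equiv.Perm V) (hσ2 : σ * σ = 1)
    (hfree : ∀ i : V, σ i ≠ i) :
    ∃ ε : V → ℝ, (∀ i, ε i * ε i = 1) ∧ ∀ i, ε (σ i) = -ε i := by
  let e := Fintype.equivFin V
  have hσ : ∀ i, σ (σ i) = i := fun i => by
    rw [← Equiv.Perm.mul_apply, hσ2, Equiv.Perm.one_apply]
  refine ⟨fun i => if e i < e (σ i) then 1 else -1, fun i => ?_, fun i => ?_⟩
  · dsimp only
    split_ifs <;> norm_num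
  · have hne : e (σ i) ≠ e i := fun h => hfree i (e.injective h)
    dsimp only
    rw [hσ]
    rcases lt_or_gt_of_ne hne with h | h
    · rw [if_pos h, if_neg h.not_gt, neg_neg]
    · rw [if_neg h.not_gt, if_pos h]

/-- Two unit vectors are exchanged by a symmetric orthogonal matrix. -/
lemma exists_swap (ν u : Fin 3 → ℝ) (hν : ν ⬝ᵥ ν = 1) (hu : u ⬝ᵥ u = 1) :
    ∃ Q : Matrix (Fin 3) (Fin 3) ℝ, Qᵀ = Q ∧ Q * Q = 1 ∧ Q *ᵥ ν = u ∧ Q *ᵥ u = ν := by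
  by_cases h : ν = u
  · exact ⟨1, by simp, by simp, by simp [h], by simp [h]⟩
  -- the reflection in the plane orthogonal to `n = ν - u`, where `n ⬝ᵥ n = 2 * (n ⬝ᵥ ν)`
  set n := ν - u with hn
  have hnn : n ⬝ᵥ n ≠ 0 := fun h0 => h (sub_eq_zero.mp (dotProduct_self_eq_zero.mp h0))
  have h1 : n ⬝ᵥ n = 2 * (n ⬝ᵥ ν) := by
    simp only [hn, sub_dotProduct, dotProduct_sub, hν, hu, dotProduct_comm u ν]; ring
  set c := 2 / (n ⬝ᵥ n) with hc
  have hcn : c * (n ⬝ᵥ n) = 2 := by rw [hc]; field_simp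
  have hact : ∀ x, (1 - c • vecMulVec n n) *ᵥ x = x - (c * (n ⬝ᵥ x)) • n := fun x => by
    rw [sub_mulVec, one_mulVec, smul_mulVec, vecMulVec_mulVec, op_smul_eq_smul, smul_smul]
  have hQQ : (1 - c • vecMulVec n n) * (1 - c • vecMulVec n n) = 1 := by
    refine Matrix.ext_iff_mulVec.mpr fun x => ?_
    rw [← mulVec_mulVec, hact, hact, one_mulVec, dotProduct_sub, dotProduct_smul, smul_eq_mul]
    have : c * (n ⬝ᵥ x - c * n ⬝ᵥ x * n ⬝ᵥ n) = -(c * n ⬝ᵥ x) := by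
      linear_combination (-(c * n ⬝ᵥ x)) * hcn
    rw [this]; module
  have hQν : (1 - c • vecMulVec n n) *ᵥ ν = u := by
    have : c * (n ⬝ᵥ ν) = 1 := by linear_combination (1 / 2) * hcn - c / 2 * h1
    rw [hact, this, one_smul, hn, sub_sub_cancel]
  refine ⟨1 - c • vecMulVec n n, ?_, hQQ, hQν, ?_⟩
  · simp [transpose_vecMulVec]
  · rw [← hQν, mulVec_mulVec, hQQ, one_mulVec]

/-- If the orthogonal matrix `Q` conjugates `A` to `-B`, then applying `Q` and flipping one point
of each vertex orbit to its antipode turns an `A`-symmetric rigid realisation into a `B`-symmetric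
one. An infinitesimal motion `q'` of the new framework comes from `ε i • Qᵀ (q' i)`, since the
edge constraint of `{i, j}` is only multiplied by `ε i * ε j`. -/
lemma transfer {V : Type*} (G : SimpleGraph V) (σ : Equiv.Perm V) (X : Set V)
    (ε : V → ℝ) (hε : ∀ i, ε i * ε i = 1) (hεσ : ∀ i, ε (σ i) = -ε i)
    (A B Q : Matrix (Fin 3) (Fin 3) ℝ) (hQ : Qᵀ * Q = 1)
    (hAB : ∀ x, B *ᵥ (Q *ᵥ x) = -(Q *ᵥ (A *ᵥ x)))
    (h : ∃ p : V → Fin 3 → ℝ, IsSphFw p ∧ MatEquiv σ A p ∧ SphRigid G p ∧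
      ∃ w : Fin 3 → ℝ, w ≠ 0 ∧ ∀ i ∈ X, w ⬝ᵥ p i = 0) :
    ∃ p : V → Fin 3 → ℝ, IsSphFw p ∧ MatEquiv σ B p ∧ SphRigid G p ∧
      ∃ w : Fin 3 → ℝ, w ≠ 0 ∧ ∀ i ∈ X, w ⬝ᵥ p i = 0 := by
  obtain ⟨p, ⟨hunit, hspan⟩, hequiv, hrigid, w, hw, hwX⟩ := h
  have hQ' : Q * Qᵀ = 1 := mul_eq_one_comm.mp hQ
  have hdot : ∀ x y, (Q *ᵥ x) ⬝ᵥ (Q *ᵥ y) = x ⬝ᵥ y := fun x y => by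
    rw [dotProduct_mulVec, vecMul_mulVec, hQ, vecMul_one]
  have hdot' : ∀ x y, x ⬝ᵥ (Qᵀ *ᵥ y) = (Q *ᵥ x) ⬝ᵥ y := fun x y => by
    rw [dotProduct_mulVec, vecMul_transpose]
  have hcancel : ∀ x, Q *ᵥ (Qᵀ *ᵥ x) = x := fun x => by
    rw [mulVec_mulVec, hQ', one_mulVec]
  have hcancel' : ∀ x, Qᵀ *ᵥ (Q *ᵥ x) = x := fun x => by
    rw [mulVec_mulVec, hQ, one_mulVec]
  refine ⟨fun i => ε i • (Q *ᵥ p i), ⟨fun i => ?_, ?_⟩, fun i => ?_, ?_, Q *ᵥ w, ?_, ?_⟩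
  · simp only [smul_dotProduct, dotProduct_smul, hdot, hunit, smul_eq_mul, mul_one, hε]
  · have hle : Submodule.span ℝ (Set.range p) ≤
        (Submodule.span ℝ (Set.range fun i => ε i • (Q *ᵥ p i))).comap Q.mulVecLin := by
      rw [Submodule.span_le]
      rintro _ ⟨i, rfl⟩
      have hmem := Submodule.smul_mem _ (ε i) (Submodule.subset_span (R := ℝ)
        (Set.mem_range_self (f := fun i => ε i • (Q *ᵥ p i)) i))
      rwa [smul_smul, hε, one_smul] at hmem
    rw [eq_top_iff]
    rintro y -
    have hy : Qᵀ *ᵥ y ∈ Submodule.span ℝ (Set.range p) := hspan ▸ Submodule.mem_top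
    have hmem := hle hy
    rwa [Submodule.mem_comap, mulVecLin_apply, hcancel] at hmem
  · dsimp only
    rw [mulVec_smul, hAB, hequiv i, hεσ, neg_smul, smul_neg]
  · rintro q' ⟨hedge, htan⟩
    have hmotion : SphMotion G p fun i => ε i • (Qᵀ *ᵥ q' i) := by
      refine ⟨fun i j hij => ?_, fun i => ?_⟩
      · have := hedge i j hij
        simp only [smul_dotProduct, dotProduct_smul, smul_eq_mul, hdot'] at this ⊢
        linear_combination (ε i * ε j) * this - ε j * ((Q *ᵥ p i) ⬝ᵥ q' j) * hε i
          - ε i * ((Q *ᵥ p j) ⬝ᵥ q' i) * hε j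
      · have := htan i
        simp only [smul_dotProduct, dotProduct_smul, smul_eq_mul, hdot'] at this ⊢
        exact this
    obtain ⟨S, hS, hq⟩ := hrigid _ hmotion
    refine ⟨Q * S * Qᵀ, ?_, fun i => ?_⟩
    · simp [transpose_mul, hS, Matrix.mul_assoc]
    · calc q' i = ε i • (Q *ᵥ (ε i • (Qᵀ *ᵥ q' i))) := by
            rw [mulVec_smul, hcancel, smul_smul, hε, one_smul]
        _ = ε i • (Q *ᵥ (S *ᵥ p i)) := by rw [← hq i]
        _ = _ := by
            rw [← mulVec_mulVec, ← mulVec_mulVec, mulVec_smul, hcancel', mulVec_smul,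
              mulVec_smul]
  · intro h0
    exact hw (by rw [← hcancel' w, h0, mulVec_zero])
  · intro i hi
    rw [dotProduct_smul, hdot, hwX i hi, smul_zero]

/-- on `S²`, realisability as an infinitesimally rigid `ℤ₂`-symmetric
spherical framework with mirror symmetry (points of `X` on a great circle) is
equivalent to realisability with half-turn symmetry (points of `X` on a great
circle). -/
theorem statement_9 {V : Type*} [Fintype V] (G : SimpleGraph V)
    (σ : Equiv.Perm V) (hσ2 : σ * σ = 1) (hσaut : IsGraphAut G σ)
    (hfree : ∀ i : V, σ i ≠ i)
    (X : Set V) (hX : ∀ i ∈ X, σ i ∈ X)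
    (A : Matrix (Fin 3) (Fin 3) ℝ) (ν : Fin 3 → ℝ) (hA : IsReflection A ν)
    (B : Matrix (Fin 3) (Fin 3) ℝ) (u : Fin 3 → ℝ) (hB : IsHalfTurn3 B u) :
    (∃ p : V → Fin 3 → ℝ, IsSphFw p ∧ MatEquiv σ A p ∧ SphRigid G p ∧
      ∃ w : Fin 3 → ℝ, w ≠ 0 ∧ ∀ i ∈ X, w ⬝ᵥ p i = 0) ↔
    (∃ p : V → Fin 3 → ℝ, IsSphFw p ∧ MatEquiv σ B p ∧ SphRigid G p ∧
      ∃ w : Fin 3 → ℝ, w ≠ 0 ∧ ∀ i ∈ X, w ⬝ᵥ p i = 0) := by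
  obtain ⟨hν, hA⟩ := hA
  obtain ⟨hu, hB⟩ := hB
  obtain ⟨ε, hε, hεσ⟩ := exists_sign σ hσ2 hfree
  obtain ⟨Q, hQt, hQQ, hQν, hQu⟩ := exists_swap ν u hν hu
  have hQ : Qᵀ * Q = 1 := by rw [hQt, hQQ]
  have hdot : ∀ x y, x ⬝ᵥ (Q *ᵥ y) = (Q *ᵥ x) ⬝ᵥ y := fun x y => by
    rw [dotProduct_mulVec, ← mulVec_transpose, hQt]
  constructor
  · refine transfer G σ X ε hε hεσ A B Q hQ fun x => ?_
    rw [hB, hA, mulVec_sub, mulVec_smul, hQν, hdot, hQu, neg_sub]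
  · refine transfer G σ X ε hε hεσ B A Q hQ fun x => ?_
    rw [hB, hA, mulVec_sub, mulVec_smul, hQu, hdot, hQν, neg_sub]

end RigidityPaper
end

section
/- Let G=(V,E) be a graph and let θ:ℤ₂→Aut(G) act freely on V. Let τ:ℤ₂→O(2) send the non-trivial element to the reflection of ℝ² in a line through the origin, and let τ':ℤ₂→O(2) send the non-trivial element to −id (the half-turn about the origin). Then G can be realised as an infinitesimally rigid (respectively, forced ℤ₂-symmetric infinitesimally rigid) ℤ₂-symmetric bar-joint framework in ℝ² with respect to θ and τ if and only if G can be realised as an infinitesimally rigid (respectively, forced ℤ₂-symmetric infinitesimally rigid) ℤ₂-symmetric bar-joint framework in ℝ² with respect to θ and τ'. -/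
/-!
Infinitesimal rigidity in the plane is invariant under projective maps. In orthonormal
coordinates with the mirror as the line `x = 0`, the projective involution
`(x, y) ↦ (1 / x, y / x)` conjugates the reflection `(x, y) ↦ (-x, y)` to the half-turn
`(x, y) ↦ (-x, -y)`. It acts on velocities by `(a, b) ↦ (-(x a + y b) / x, b / x)`, again an
involution; this preserves motions and trivial motions, and carries equivariant velocities
of one symmetry type to those of the other (`CMotion.proj`, `CTriv.proj`,
`CSym.proj_motion`, whence `CRigid.proj`). On the cone over the plane it is the transposition
of the first and third coordinates of `(x, y, 1)`, followed by a rescaling.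

The involution needs every vertex to avoid the line `x = 0`. Since the action on vertices is
free, there is a nowhere vanishing function `e` on `V` odd under `σ`, and `(x + t e, y)` is a
symmetric framework of the same type avoiding that line for all small `t ≠ 0`. It is still
rigid for small `t` (`CRigid.eventually`): rigidity says that the complex
(trivial motions) → (velocities) → (edge and symmetry constraints) is exact in the middle,
and exactness at a point where the first map is injective is an open condition
(`eventually_exact`). Plain rigidity is treated as symmetric rigidity for the trivial group.
-/

open Matrix

namespace RigidityPaper

variable {V : Type*}

open Filter Topology

/-! ### Persistence of exactness under perturbation -/

/-- In a finite-dimensional space, a linear map that is injective at `t = 0` stays injective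
along an affine family for all small `t`. -/
theorem eventually_injective {E F : Type*} [NormedAddCommGroup E] [NormedSpace ℝ E]
    [FiniteDimensional ℝ E] [AddCommGroup F] [Module ℝ F]
    (L₀ L₁ : E →ₗ[ℝ] F) (h : Function.Injective L₀) :
    ∀ᶠ t : ℝ in 𝓝 0, Function.Injective (L₀ + t • L₁) := by
  obtain ⟨Q, hQ⟩ := L₀.exists_leftInverse_of_injective (LinearMap.ker_eq_bot.2 h)
  -- `Q ∘ (L₀ + t L₁) = 1 + t X` is a unit of the Banach algebra `E →L[ℝ] E` for small `t`.
  let X : E →L[ℝ] E := LinearMap.toContinuousLinearMap (Q ∘ₗ L₁)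
  have hc : Continuous fun t : ℝ => (1 : E →L[ℝ] E) + t • X := by fun_prop
  have : CompleteSpace E := FiniteDimensional.complete ℝ E
  have hu : ∀ᶠ t : ℝ in 𝓝 0, IsUnit ((1 : E →L[ℝ] E) + t • X) := by
    have h0 : {f : E →L[ℝ] E | IsUnit f} ∈ 𝓝 ((1 : E →L[ℝ] E) + (0 : ℝ) • X) :=
      Units.isOpen.mem_nhds (by simp)
    exact hc.continuousAt h0
  filter_upwards [hu] with t ht
  rw [injective_iff_map_eq_zero]
  intro v hv
  obtain ⟨w, hw⟩ := ht
  have h1 : ((1 : E →L[ℝ] E) + t • X) v = 0 := by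
    have := congrArg Q hv
    have hQv : Q (L₀ v) = v := LinearMap.congr_fun hQ v
    simpa [X, hQv] using this
  have h2 : ((w⁻¹ : (E →L[ℝ] E)ˣ) * w : E →L[ℝ] E) v = v := by simp
  rw [← h2, hw, mul_apply_eq_comp, h1, map_zero]

/-- If `K --T--> E --R--> F` is exact at `E` with `T` injective at `t = 0`, and remains a
complex along an affine family, then it remains exact at `E` for small `t`. -/
theorem eventually_exact {K E F : Type*} [NormedAddCommGroup E] [NormedSpace ℝ E]
    [FiniteDimensional ℝ E] [NormedAddCommGroup K] [NormedSpace ℝ K] [FiniteDimensional ℝ K]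
    [AddCommGroup F] [Module ℝ F] (T₀ T₁ : K →ₗ[ℝ] E) (R₀ R₁ : E →ₗ[ℝ] F)
    (hT : Function.Injective T₀) (hex : ∀ u, R₀ u = 0 → ∃ k, T₀ k = u)
    (hcomplex : ∀ (t : ℝ) k, (R₀ + t • R₁) ((T₀ + t • T₁) k) = 0) :
    ∀ᶠ t : ℝ in 𝓝 0, ∀ u, (R₀ + t • R₁) u = 0 → ∃ k, (T₀ + t • T₁) k = u := by
  obtain ⟨P, hP⟩ := T₀.exists_leftInverse_of_injective (LinearMap.ker_eq_bot.2 hT)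
  -- `P` is a choice of pinning: on its kernel, `R₀` is injective.
  have h1 : Function.Injective (R₀.prod P) := by
    rw [injective_iff_map_eq_zero]
    intro u hu
    obtain ⟨hu1, hu2⟩ := Prod.mk.inj hu
    obtain ⟨k, rfl⟩ := hex u hu1
    have hk : P (T₀ k) = k := LinearMap.congr_fun hP k
    have : k = 0 := by rw [← hk]; exact hu2
    simp [this]
  have h2 : Function.Injective (P ∘ₗ T₀) := by rw [hP]; exact Function.injective_id
  filter_upwards [eventually_injective _ (R₁.prod 0) h1, eventually_injective _ (P ∘ₗ T₁) h2]
    with t ht1 ht2 u hu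
  obtain ⟨k, hk⟩ := (LinearMap.injective_iff_surjective.1 ht2) (P u)
  refine ⟨k, ?_⟩
  have hz : (R₀.prod P + t • R₁.prod (0 : E →ₗ[ℝ] K)) ((T₀ + t • T₁) k - u) = 0 := by
    refine Prod.ext ?_ ?_
    · have := hcomplex t k
      have h3 : (R₀ + t • R₁) ((T₀ + t • T₁) k - u) = 0 := by rw [map_sub, this, hu, sub_zero]
      simpa using h3
    · have h4 : P ((T₀ + t • T₁) k - u) = 0 := by
        rw [map_sub, ← hk]; simp
      simpa using h4
  exact sub_eq_zero.1 ((injective_iff_map_eq_zero _).1 ht1 _ hz)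

/-! ### Frameworks in orthonormal coordinates -/

/-- `(a, b)` is an infinitesimal motion of the plane framework with coordinate functions
`(x, y)`. -/
def CMotion (G : SimpleGraph V) (x y a b : V → ℝ) : Prop :=
  ∀ i j, G.Adj i j → (x i - x j) * (a i - a j) + (y i - y j) * (b i - b j) = 0

/-- `(a, b)` is a trivial infinitesimal motion of the framework `(x, y)`. -/
def CTriv (x y a b : V → ℝ) : Prop :=
  ∃ s t₁ t₂ : ℝ, ∀ i, a i = -s * y i + t₁ ∧ b i = s * x i + t₂

/-- `(x, y)` is equivariant under the vertex permutation `ρ` and the matrix `diag(α, β)`. -/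
def CSym (ρ : Equiv.Perm V) (α β : ℝ) (x y : V → ℝ) : Prop :=
  ∀ i, x (ρ i) = α * x i ∧ y (ρ i) = β * y i

/-- Every infinitesimal motion of `(x, y)` that is equivariant under `ρ` and `diag(α, β)` is
trivial. Unrestricted infinitesimal rigidity is the case `ρ = 1`, `α = β = 1`. -/
def CRigid (G : SimpleGraph V) (ρ : Equiv.Perm V) (α β : ℝ) (x y : V → ℝ) : Prop :=
  ∀ a b, CMotion G x y a b → CSym ρ α β a b → CTriv x y a b

/-- The rigidity operator of `(x, y)` on pairs `(a, b)`. -/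
def rigOp (G : SimpleGraph V) [DecidableRel G.Adj] (x y : V → ℝ) :
    (V → ℝ) × (V → ℝ) →ₗ[ℝ] (V → V → ℝ) where
  toFun u i j := if G.Adj i j then
    (x i - x j) * (u.1 i - u.1 j) + (y i - y j) * (u.2 i - u.2 j) else 0
  map_add' u v := by
    funext i j; by_cases h : G.Adj i j <;> simp [h]; ring
  map_smul' c u := by
    funext i j; by_cases h : G.Adj i j <;> simp [h]; ring

/-- The operator whose kernel consists of the pairs equivariant under `ρ`, `diag(α, β)`. -/
def symOp (ρ : Equiv.Perm V) (α β : ℝ) :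
    (V → ℝ) × (V → ℝ) →ₗ[ℝ] (V → ℝ) × (V → ℝ) where
  toFun u := (fun i => u.1 (ρ i) - α * u.1 i, fun i => u.2 (ρ i) - β * u.2 i)
  map_add' u v := by
    ext i <;> simp <;> ring
  map_smul' c u := by
    ext i <;> simp <;> ring

/-- The trivial motion of `(x, y)` with rotational part `s` and translational part
`(t₁, t₂)`. -/
def trivOp (x y : V → ℝ) : ℝ × ℝ × ℝ →ₗ[ℝ] (V → ℝ) × (V → ℝ) where
  toFun k := (fun i => -k.1 * y i + k.2.1, fun i => k.1 * x i + k.2.2)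
  map_add' k l := by
    ext i <;> simp <;> ring
  map_smul' c k := by
    ext i <;> simp <;> ring

/-- The trivial motions `(s, t₁, t₂)` commuting with `diag(α, β)`. -/
def symTriv (α β : ℝ) : Submodule ℝ (ℝ × ℝ × ℝ) where
  carrier := {k | k.1 * (α - β) = 0 ∧ (α - 1) * k.2.1 = 0 ∧ (β - 1) * k.2.2 = 0}
  zero_mem' := by simp
  add_mem' := by
    rintro k l ⟨h1, h2, h3⟩ ⟨h4, h5, h6⟩
    exact ⟨by simp only [Prod.fst_add]; linear_combination h1 + h4,
      by simp only [Prod.fst_add, Prod.snd_add]; linear_combination h2 + h5,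
      by simp only [Prod.snd_add]; linear_combination h3 + h6⟩
  smul_mem' := by
    rintro c k ⟨h1, h2, h3⟩
    exact ⟨by simp only [Prod.smul_fst, smul_eq_mul]; linear_combination c * h1,
      by simp only [Prod.smul_fst, Prod.smul_snd, smul_eq_mul]; linear_combination c * h2,
      by simp only [Prod.smul_snd, smul_eq_mul]; linear_combination c * h3⟩

/-- Symmetric rigidity is an open condition along the symmetric deformation
`(x + t e, y)`. The non-constant field `(e, 0)` also forces the points of a rigid `(x, y)`
not to coincide: otherwise `(e, 0)` would be a non-trivial motion. -/
theorem CRigid.eventually [Fintype V] {G : SimpleGraph V} {ρ : Equiv.Perm V} {α β : ℝ}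
    {x y e : V → ℝ} (hxy : CSym ρ α β x y) (he : CSym ρ α β e 0)
    {i₀ j₀ : V} (hne : e i₀ ≠ e j₀) (h : CRigid G ρ α β x y) :
    ∀ᶠ t : ℝ in 𝓝 0, CRigid G ρ α β (x + t • e) y := by
  classical
  obtain ⟨m, n, hmn⟩ : ∃ m n, x m ≠ x n ∨ y m ≠ y n := by
    by_contra! hcon
    obtain ⟨s, t₁, t₂, hst⟩ := h e 0
      (fun i j _ => by simp [(hcon i j).1, (hcon i j).2]) he
    exact hne (by rw [(hst i₀).1, (hst j₀).1, (hcon i₀ j₀).2])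
  have hfaithful : ∀ s c d : ℝ, (∀ i, s * y i = c) → (∀ i, s * x i = d) → s = 0 := by
    intro s c d hc hd
    have h1 : s * (x m - x n) = 0 := by linear_combination hd m - hd n
    have h2 : s * (y m - y n) = 0 := by linear_combination hc m - hc n
    rcases hmn with hmn | hmn
    · exact (mul_eq_zero.1 h1).resolve_right (sub_ne_zero.2 hmn)
    · exact (mul_eq_zero.1 h2).resolve_right (sub_ne_zero.2 hmn)
  have key := eventually_exact
    (trivOp x y ∘ₗ (symTriv α β).subtype) (trivOp e 0 ∘ₗ (symTriv α β).subtype -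
      trivOp 0 0 ∘ₗ (symTriv α β).subtype)
    ((rigOp G x y).prod (symOp ρ α β)) ((rigOp G e 0).prod 0) ?_ ?_ ?_
  · filter_upwards [key] with t ht a b hab hsym
    obtain ⟨k, hk⟩ := ht (a, b) (by
      refine Prod.ext ?_ (Prod.ext ?_ ?_)
      · funext i j
        by_cases hij : G.Adj i j
        · have := hab i j hij
          simp [rigOp, hij] at this ⊢
          linear_combination this
        · simp [rigOp, hij]
      · funext i
        simp [symOp, (hsym i).1]
      · funext i
        simp [symOp, (hsym i).2])
    refine ⟨k.1.1, k.1.2.1, k.1.2.2, fun i => ⟨?_, ?_⟩⟩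
    · have := congrFun (congrArg Prod.fst hk) i
      simp [trivOp] at this ⊢
      linear_combination -this
    · have := congrFun (congrArg Prod.snd hk) i
      simp [trivOp] at this ⊢
      linear_combination -this
  · rw [injective_iff_map_eq_zero]
    rintro ⟨⟨s, t₁, t₂⟩, hk⟩ hz
    have h1 : ∀ i, -s * y i + t₁ = 0 := fun i => congrFun (congrArg Prod.fst hz) i
    have h2 : ∀ i, s * x i + t₂ = 0 := fun i => congrFun (congrArg Prod.snd hz) i
    have hs := hfaithful s t₁ (-t₂) (fun i => by linear_combination -h1 i)
      (fun i => by linear_combination h2 i)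
    subst hs
    have h3 := h1 m
    have h4 := h2 m
    simp at h3 h4
    simp [h3, h4]
  · rintro ⟨a, b⟩ hu
    have hr : rigOp G x y (a, b) = 0 := congrArg Prod.fst hu
    have hsy : symOp ρ α β (a, b) = 0 := congrArg Prod.snd hu
    have hsym : CSym ρ α β a b := fun i =>
      ⟨sub_eq_zero.1 (congrFun (congrArg Prod.fst hsy) i),
        sub_eq_zero.1 (congrFun (congrArg Prod.snd hsy) i)⟩
    obtain ⟨s, t₁, t₂, hst⟩ := h a b (fun i j hij => by
      simpa [rigOp, hij] using congrFun (congrFun hr i) j) hsym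
    -- Comparing `(a, b)` at `ρ i` and `i` shows that `s * (α - β)` annihilates all
    -- coordinate differences.
    have h1 : ∀ i, s * (α - β) * y i = (α - 1) * t₁ := fun i => by
      have := (hsym i).1
      rw [(hst _).1, (hst _).1, (hxy i).2] at this
      linear_combination this
    have h2 : ∀ i, s * (α - β) * x i = (β - 1) * t₂ := fun i => by
      have := (hsym i).2
      rw [(hst _).2, (hst _).2, (hxy i).1] at this
      linear_combination this
    have hs := hfaithful _ _ _ h1 h2
    refine ⟨⟨(s, t₁, t₂), hs, ?_, ?_⟩, ?_⟩
    · have := h1 m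
      rw [hs, zero_mul] at this; exact this.symm
    · have := h2 m
      rw [hs, zero_mul] at this; exact this.symm
    · refine Prod.ext ?_ ?_
      · funext i; exact (hst i).1.symm
      · funext i; exact (hst i).2.symm
  · rintro t ⟨⟨s, t₁, t₂⟩, hk1, hk2, hk3⟩
    simp only at hk1 hk2 hk3
    refine Prod.ext ?_ (Prod.ext ?_ ?_)
    · funext i j
      by_cases hij : G.Adj i j
      · simp [rigOp, trivOp, hij]
        ring
      · simp [rigOp, hij]
    · funext i
      simp [symOp, trivOp, (hxy i).2]
      linear_combination hk1 * y i - hk2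
    · funext i
      simp [symOp, trivOp, (hxy i).1, (he i).1]
      linear_combination hk1 * (x i + t * e i) - hk3

/-! ### The projective involution -/

theorem CMotion.proj {G : SimpleGraph V} {x y a b : V → ℝ} (hx : ∀ i, x i ≠ 0)
    (h : CMotion G x y a b) :
    CMotion G (fun i => 1 / x i) (fun i => y i / x i)
      (fun i => -(x i * a i + y i * b i) / x i) (fun i => b i / x i) := by
  intro i j hij
  have hi := hx i
  have hj := hx j
  have := h i j hij
  have e : (1 / x i - 1 / x j) * (-(x i * a i + y i * b i) / x i -
      -(x j * a j + y j * b j) / x j) + (y i / x i - y j / x j) * (b i / x i - b j / x j)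
      = ((x i - x j) * (a i - a j) + (y i - y j) * (b i - b j)) / (x i * x j) := by
    field_simp
    ring
  rw [e, this, zero_div]

theorem CTriv.proj {x y a b : V → ℝ} (hx : ∀ i, x i ≠ 0) (h : CTriv x y a b) :
    CTriv (fun i => 1 / x i) (fun i => y i / x i)
      (fun i => -(x i * a i + y i * b i) / x i) (fun i => b i / x i) := by
  obtain ⟨s, t₁, t₂, h⟩ := h
  refine ⟨t₂, -t₁, s, fun i => ?_⟩
  have hi := hx i
  simp only [(h i).1, (h i).2]
  constructor <;> field_simp <;> ring

/-- The projective involution multiplies the second sign of the symmetry type by the first. -/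
theorem CSym.proj {ρ : Equiv.Perm V} {α β : ℝ} {x y : V → ℝ} (hα : α * α = 1)
    (h : CSym ρ α β x y) :
    CSym ρ α (α * β) (fun i => 1 / x i) (fun i => y i / x i) := by
  have hα' : α⁻¹ = α := inv_eq_of_mul_eq_one_left hα
  intro i
  simp only [(h i).1, (h i).2, div_eq_mul_inv, mul_inv, hα']
  constructor <;> ring

theorem CSym.proj_motion {ρ : Equiv.Perm V} {α β : ℝ} {x y a b : V → ℝ} (hα : α * α = 1)
    (hβ : β * β = 1) (h : CSym ρ α β x y) (hab : CSym ρ α β a b) :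
    CSym ρ α (α * β) (fun i => -(x i * a i + y i * b i) / x i) (fun i => b i / x i) := by
  have hα' : α⁻¹ = α := inv_eq_of_mul_eq_one_left hα
  intro i
  simp only [(h i).1, (h i).2, (hab i).1, (hab i).2, div_eq_mul_inv, mul_inv, hα']
  constructor
  · linear_combination (-(α * (x i)⁻¹ * (x i * a i))) * hα - (α * (x i)⁻¹ * (y i * b i)) * hβ
  · ring

/-- The map `(x, y) ↦ (1 / x, y / x)` preserves rigidity: it is an involution, and it acts
on motions by an involution preserving triviality. -/
theorem CRigid.proj {G : SimpleGraph V} {ρ : Equiv.Perm V} {α β : ℝ} {x y : V → ℝ}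
    (hα : α * α = 1) (hβ : β * β = 1) (hx : ∀ i, x i ≠ 0) (hxy : CSym ρ α β x y)
    (h : CRigid G ρ α β x y) :
    CRigid G ρ α (α * β) (fun i => 1 / x i) (fun i => y i / x i) := by
  intro a b hab hsym
  have hx' : ∀ i, 1 / x i ≠ 0 := fun i => one_div_ne_zero (hx i)
  have hm := hab.proj hx'
  have hs := (hxy.proj hα).proj_motion hα
    (by linear_combination β * β * hα + hβ) hsym
  have e1 : (fun i => 1 / (1 / x i)) = x := by funext i; simp
  have e2 : (fun i => y i / x i / (1 / x i)) = y := by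
    funext i; have := hx i; field_simp
  have e3 : α * (α * β) = β := by linear_combination β * hα
  simp only [e1, e2, e3] at hm hs
  have := (h _ _ hm hs).proj hx
  convert this using 1
  · funext i
    have := hx i
    field_simp
    ring
  · funext i
    have := hx i
    field_simp

/-- Passage between the symmetry types `diag(-1, β)` and `diag(-1, -β)`: move the points off
the line `x = 0`, which is possible as `σ` acts freely, and apply the projective
involution. -/
theorem exists_swap_s11 [Fintype V] (G : SimpleGraph V) {σ ρ : Equiv.Perm V} (hσ2 : σ * σ = 1)
    (hfree : ∀ i, σ i ≠ i) {β γ α : ℝ} (hα : α * α = 1) (hγ : γ * γ = 1)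
    (hρ : ∀ x y, CSym σ (-1) β x y → CSym ρ α γ x y)
    (h : ∃ x y, CSym σ (-1) β x y ∧ CRigid G ρ α γ x y) :
    ∃ x y, CSym σ (-1) (-β) x y ∧ CRigid G ρ α (α * γ) x y := by
  obtain ⟨x, y, hxy, hr⟩ := h
  rcases isEmpty_or_nonempty V with hV | ⟨⟨i₀⟩⟩
  · exact ⟨x, y, fun i => isEmptyElim i, fun a b _ _ => ⟨0, 0, 0, fun i => isEmptyElim i⟩⟩
  have hσσ : ∀ i, σ (σ i) = i := fun i => by
    rw [← Equiv.Perm.mul_apply, hσ2, Equiv.Perm.one_apply]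
  -- A nowhere vanishing function that is odd under `σ`.
  let f := Fintype.equivFin V
  let e : V → ℝ := fun i => ((f i : ℕ) : ℝ) - ((f (σ i) : ℕ) : ℝ)
  have he0 : ∀ i, e i ≠ 0 := fun i hi => by
    have h1 : ((f i : ℕ) : ℝ) = ((f (σ i) : ℕ) : ℝ) := sub_eq_zero.1 hi
    exact hfree i (f.injective (Fin.ext (Nat.cast_injective h1))).symm
  have heσ : CSym σ (-1) β e 0 := fun i => by
    refine ⟨?_, by simp⟩
    simp only [e, hσσ]; ring
  have hne : e i₀ ≠ e (σ i₀) := fun h => he0 i₀ (by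
    rw [(heσ i₀).1] at h; linarith)
  have h1 : ∀ᶠ t : ℝ in 𝓝[≠] 0, CRigid G ρ α γ (x + t • e) y :=
    (hr.eventually (hρ _ _ hxy) (hρ _ _ heσ) hne).filter_mono nhdsWithin_le_nhds
  have h2 : ∀ᶠ t : ℝ in 𝓝[≠] 0, ∀ i, (x + t • e) i ≠ 0 := by
    rw [Filter.eventually_all]
    intro i
    by_cases hxi : x i = 0
    · filter_upwards [self_mem_nhdsWithin] with t ht
      simpa [hxi, he0 i] using ht
    · have hc : Continuous fun t : ℝ => (x + t • e) i := by
        simp only [Pi.add_apply, Pi.smul_apply, smul_eq_mul]; fun_prop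
      exact (hc.continuousAt.eventually_ne (by simpa using hxi)).filter_mono nhdsWithin_le_nhds
  obtain ⟨t, ht1, ht2⟩ := (h1.and h2).exists
  have hsym : CSym σ (-1) β (x + t • e) y := fun i => by
    refine ⟨?_, (hxy i).2⟩
    simp only [Pi.add_apply, Pi.smul_apply, smul_eq_mul, (hxy i).1, (heσ i).1]; ring
  refine ⟨_, _, ?_, ht1.proj hα hγ ht2 (hρ _ _ hsym)⟩
  simpa using hsym.proj (by norm_num)

/-! ### Passage to coordinates -/

/-- First coordinate in the orthonormal basis `ν`, `ν^⊥`. -/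
def cx (ν : Fin 2 → ℝ) (p : V → Fin 2 → ℝ) : V → ℝ := fun i => ν 0 * p i 0 + ν 1 * p i 1

/-- Second coordinate in the orthonormal basis `ν`, `ν^⊥`. -/
def cy (ν : Fin 2 → ℝ) (p : V → Fin 2 → ℝ) : V → ℝ := fun i => ν 0 * p i 1 - ν 1 * p i 0

theorem exists_coord {ν : Fin 2 → ℝ} (hν : ν 0 * ν 0 + ν 1 * ν 1 = 1) (x y : V → ℝ) :
    ∃ p : V → Fin 2 → ℝ, cx ν p = x ∧ cy ν p = y := by
  refine ⟨fun i => ![ν 0 * x i - ν 1 * y i, ν 1 * x i + ν 0 * y i], ?_, ?_⟩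
  · funext i; simp [cx]; linear_combination x i * hν
  · funext i; simp [cy]; linear_combination y i * hν

theorem coord_inj {ν : Fin 2 → ℝ} (hν : ν 0 * ν 0 + ν 1 * ν 1 = 1) {v w : Fin 2 → ℝ} :
    v = w ↔ ν 0 * v 0 + ν 1 * v 1 = ν 0 * w 0 + ν 1 * w 1 ∧
      ν 0 * v 1 - ν 1 * v 0 = ν 0 * w 1 - ν 1 * w 0 := by
  constructor
  · rintro rfl; simp
  · rintro ⟨h1, h2⟩
    funext i
    fin_cases i
    · simp only [Fin.zero_eta]
      linear_combination (w 0 - v 0) * hν + ν 0 * h1 - ν 1 * h2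
    · simp only [Fin.mk_one]
      linear_combination (w 1 - v 1) * hν + ν 1 * h1 + ν 0 * h2

theorem bjMotion_iff {G : SimpleGraph V} {ν : Fin 2 → ℝ} (hν : ν 0 * ν 0 + ν 1 * ν 1 = 1)
    {p u : V → Fin 2 → ℝ} :
    BJMotion G p u ↔ CMotion G (cx ν p) (cy ν p) (cx ν u) (cy ν u) := by
  refine forall_congr' fun i => forall_congr' fun j => imp_congr_right fun _ => ?_
  have e : (cx ν p i - cx ν p j) * (cx ν u i - cx ν u j) +
      (cy ν p i - cy ν p j) * (cy ν u i - cy ν u j) = (p i - p j) ⬝ᵥ (u i - u j) := by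
    simp only [cx, cy, dotProduct, Fin.sum_univ_two, Pi.sub_apply]
    linear_combination ((p i 0 - p j 0) * (u i 0 - u j 0) +
      (p i 1 - p j 1) * (u i 1 - u j 1)) * hν
  rw [e]

theorem bjTrivial_iff {ν : Fin 2 → ℝ} (hν : ν 0 * ν 0 + ν 1 * ν 1 = 1)
    {p u : V → Fin 2 → ℝ} :
    BJTrivial p u ↔ CTriv (cx ν p) (cy ν p) (cx ν u) (cy ν u) := by
  constructor
  · rintro ⟨S, t, hS, h⟩
    have h00 : S 0 0 = 0 := by
      have := congrFun (congrFun hS 0) 0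
      simp at this; linarith
    have h11 : S 1 1 = 0 := by
      have := congrFun (congrFun hS 1) 1
      simp at this; linarith
    have h01 : S 0 1 = -S 1 0 := congrFun (congrFun hS 1) 0
    refine ⟨S 1 0, ν 0 * t 0 + ν 1 * t 1, ν 0 * t 1 - ν 1 * t 0, fun i => ?_⟩
    simp only [cx, cy, h i, mulVec, dotProduct, Fin.sum_univ_two, Pi.add_apply, h00, h11, h01]
    constructor <;> ring
  · rintro ⟨s, t₁, t₂, h⟩
    refine ⟨!![0, -s; s, 0], ![ν 0 * t₁ - ν 1 * t₂, ν 1 * t₁ + ν 0 * t₂], ?_, fun i => ?_⟩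
    · ext i j; fin_cases i <;> fin_cases j <;> simp
    · obtain ⟨h1, h2⟩ := h i
      rw [coord_inj hν]
      simp only [cx, cy] at h1 h2
      rw [h1, h2]
      simp [dotProduct, Fin.sum_univ_two]
      constructor
      · linear_combination -t₁ * hν
      · linear_combination -t₂ * hν

theorem matEquiv_reflection_iff {σ : Equiv.Perm V} {A : Matrix (Fin 2) (Fin 2) ℝ}
    {ν : Fin 2 → ℝ} (hν : ν 0 * ν 0 + ν 1 * ν 1 = 1) (hA : IsReflection A ν)
    (p : V → Fin 2 → ℝ) : MatEquiv σ A p ↔ CSym σ (-1) 1 (cx ν p) (cy ν p) := by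
  refine forall_congr' fun i => ?_
  rw [hA.2, coord_inj hν]
  simp only [cx, cy, dotProduct, Fin.sum_univ_two, Pi.sub_apply, Pi.smul_apply, smul_eq_mul]
  refine and_congr ⟨fun h => ?_, fun h => ?_⟩ ⟨fun h => ?_, fun h => ?_⟩
  · linear_combination -h - 2 * (ν 0 * p i 0 + ν 1 * p i 1) * hν
  · linear_combination -h - 2 * (ν 0 * p i 0 + ν 1 * p i 1) * hν
  · linear_combination -h
  · linear_combination -h

theorem matEquiv_neg_one_iff {σ : Equiv.Perm V} {ν : Fin 2 → ℝ}
    (hν : ν 0 * ν 0 + ν 1 * ν 1 = 1) (p : V → Fin 2 → ℝ) :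
    MatEquiv σ (-1 : Matrix (Fin 2) (Fin 2) ℝ) p ↔ CSym σ (-1) (-1) (cx ν p) (cy ν p) := by
  refine forall_congr' fun i => ?_
  rw [coord_inj hν]
  simp only [cx, cy, neg_mulVec, one_mulVec, Pi.neg_apply]
  refine and_congr ⟨fun h => ?_, fun h => ?_⟩ ⟨fun h => ?_, fun h => ?_⟩ <;>
    linear_combination -h

theorem csym_one (x y : V → ℝ) : CSym 1 1 1 x y := fun i => by simp

theorem bjForcedRigid_iff {G : SimpleGraph V} {ν : Fin 2 → ℝ}
    (hν : ν 0 * ν 0 + ν 1 * ν 1 = 1) {sym : (V → Fin 2 → ℝ) → Prop} {ρ : Equiv.Perm V}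
    {α β : ℝ} (hsym : ∀ u, sym u ↔ CSym ρ α β (cx ν u) (cy ν u)) {p : V → Fin 2 → ℝ} :
    BJForcedRigid G sym p ↔ CRigid G ρ α β (cx ν p) (cy ν p) := by
  constructor
  · intro h a b hm hs
    obtain ⟨u, rfl, rfl⟩ := exists_coord hν a b
    exact (bjTrivial_iff hν).1 (h u ((bjMotion_iff hν).2 hm) ((hsym u).2 hs))
  · intro h u hm hs
    exact (bjTrivial_iff hν).2 (h _ _ ((bjMotion_iff hν).1 hm) ((hsym u).1 hs))

theorem bjRigid_iff {G : SimpleGraph V} {ν : Fin 2 → ℝ} (hν : ν 0 * ν 0 + ν 1 * ν 1 = 1)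
    {p : V → Fin 2 → ℝ} : BJRigid G p ↔ CRigid G 1 1 1 (cx ν p) (cy ν p) := by
  rw [← bjForcedRigid_iff hν (sym := fun _ => True) fun u => by simp [csym_one]]
  simp [BJRigid, BJForcedRigid]

theorem exists_iff_coord {ν : Fin 2 → ℝ} (hν : ν 0 * ν 0 + ν 1 * ν 1 = 1)
    {P R : (V → Fin 2 → ℝ) → Prop} {Q S : (V → ℝ) → (V → ℝ) → Prop}
    (hP : ∀ p, P p ↔ Q (cx ν p) (cy ν p)) (hR : ∀ p, R p ↔ S (cx ν p) (cy ν p)) :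
    (∃ p, P p ∧ R p) ↔ ∃ x y, Q x y ∧ S x y := by
  constructor
  · rintro ⟨p, hp, hp'⟩
    exact ⟨_, _, (hP p).1 hp, (hR p).1 hp'⟩
  · rintro ⟨x, y, hxy, hxy'⟩
    obtain ⟨p, rfl, rfl⟩ := exists_coord hν x y
    exact ⟨p, (hP p).2 hxy, (hR p).2 hxy'⟩

/-- in `ℝ²`, realisability of `G` as an infinitesimally rigid
(respectively forced `ℤ₂`-symmetric infinitesimally rigid) `ℤ₂`-symmetric bar-joint
framework with mirror symmetry is equivalent to the same with half-turn symmetry. -/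
theorem statement_11 {V : Type*} [Fintype V] (G : SimpleGraph V)
    (σ : Equiv.Perm V) (hσ2 : σ * σ = 1) (hσaut : IsGraphAut G σ)
    (hfree : ∀ i : V, σ i ≠ i)
    (A : Matrix (Fin 2) (Fin 2) ℝ) (ν : Fin 2 → ℝ) (hA : IsReflection A ν) :
    ((∃ p : V → Fin 2 → ℝ, MatEquiv σ A p ∧ BJRigid G p) ↔
      (∃ p : V → Fin 2 → ℝ, MatEquiv σ (-1 : Matrix (Fin 2) (Fin 2) ℝ) p ∧
        BJRigid G p)) ∧
    ((∃ p : V → Fin 2 → ℝ, MatEquiv σ A p ∧ BJForcedRigid G (MatEquiv σ A) p) ↔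
      (∃ p : V → Fin 2 → ℝ, MatEquiv σ (-1 : Matrix (Fin 2) (Fin 2) ℝ) p ∧
        BJForcedRigid G (MatEquiv σ (-1 : Matrix (Fin 2) (Fin 2) ℝ)) p)) := by
  have hν : ν 0 * ν 0 + ν 1 * ν 1 = 1 := by
    have := hA.1
    simpa [dotProduct, Fin.sum_univ_two] using this
  have hr := matEquiv_reflection_iff (σ := σ) hν hA
  have hh := matEquiv_neg_one_iff (σ := σ) hν
  have hrig : ∀ p, BJRigid G p ↔ CRigid G 1 1 1 (cx ν p) (cy ν p) := fun p => bjRigid_iff hν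
  rw [exists_iff_coord hν hr hrig, exists_iff_coord hν hh hrig,
    exists_iff_coord hν hr fun p => bjForcedRigid_iff hν hr,
    exists_iff_coord hν hh fun p => bjForcedRigid_iff hν hh]
  refine ⟨⟨fun h => ?_, fun h => ?_⟩, ⟨fun h => ?_, fun h => ?_⟩⟩
  · simpa using exists_swap_s11 G hσ2 hfree (by norm_num) (by norm_num)
      (fun x y _ => csym_one x y) h
  · simpa using exists_swap_s11 G hσ2 hfree (by norm_num) (by norm_num)
      (fun x y _ => csym_one x y) h
  · simpa using exists_swap_s11 G hσ2 hfree (by norm_num) (by norm_num) (fun x y hs => hs) h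
  · simpa using exists_swap_s11 G hσ2 hfree (by norm_num) (by norm_num) (fun x y hs => hs) h

end RigidityPaper
end

section
/- Let (G,p) be a Γ-symmetric spherical framework on S² with respect to θ:Γ→Aut(G) and τ:Γ→O(3), where −I₃∉τ(Γ). Let Γ'=Γ×{1,−1}, let G' be the disjoint union of two copies G×{1} and G×{2} of G, let p'(i,1)=p(i) and p'(i,2)=−p(i), let θ':Γ'→Aut(G') be given by θ'(γ,1)(i,c)=(θ(γ)(i),c) and θ'(γ,−1)(i,c)=(θ(γ)(i),c̄) (where c̄ swaps 1 and 2), and let τ'(γ,ε)=ε·τ(γ). Then (G',p') is a Γ'-symmetric spherical framework on S² with respect to θ' and τ', and (G,p) is forced Γ-symmetric infinitesimally rigid if and only if (G',p') is forced Γ'-symmetric infinitesimally rigid. -/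
/-!
The map `u ↦ (u, -u)` identifies the `Γ`-symmetric motions of `(G, p)` with the
`Γ × {1, -1}`-symmetric motions of `(G', p')`: equivariance under the pair `(1, -1)` says exactly
that a motion of `G'` takes opposite values at the two copies of a vertex. Since `p' = (p, -p)` and
the first-order conditions are bilinear, each edge of `G` and its two copies in `G'` impose the same
condition on corresponding motions. A skew-symmetric matrix generates `u` from `p` iff it generates
`(u, -u)` from `(p, -p)`, so trivial motions correspond as well.
-/

open Matrix

namespace RigidityPaper

variable {V : Type*}

/-- An assignment on the double cover `V × Bool` is antipodal over `q` if it equals `q` on the first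
copy of `V` and `-q` on the second. -/
def Antipodal {n : ℕ} (q : V → Fin n → ℝ) (q' : V × Bool → Fin n → ℝ) : Prop :=
  ∀ i, q' (i, true) = q i ∧ q' (i, false) = -q i

theorem Antipodal.isSphFw {n : ℕ} {p : V → Fin n → ℝ} {p' : V × Bool → Fin n → ℝ}
    (h : Antipodal p p') (hp : IsSphFw p) : IsSphFw p' := by
  refine ⟨?_, top_le_iff.mp ?_⟩
  · rintro ⟨i, _ | _⟩
    · simp [(h i).2, hp.1 i]
    · simp [(h i).1, hp.1 i]
  · rw [← hp.2]
    refine Submodule.span_mono ?_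
    rintro _ ⟨i, rfl⟩
    exact ⟨(i, true), (h i).1⟩

theorem Antipodal.matEquiv_refl {n : ℕ} {q : V → Fin n → ℝ} {q' : V × Bool → Fin n → ℝ}
    (h : Antipodal q q') {σ : Equiv.Perm V} {A : Matrix (Fin n) (Fin n) ℝ}
    (hq : MatEquiv σ A q) : MatEquiv (Equiv.prodCongr σ (Equiv.refl Bool)) A q' := by
  rintro ⟨i, _ | _⟩
  · simp [(h _).2, hq i, Matrix.mulVec_neg]
  · simp [(h _).1, hq i]

theorem Antipodal.matEquiv_swap {n : ℕ} {q : V → Fin n → ℝ} {q' : V × Bool → Fin n → ℝ}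
    (h : Antipodal q q') {σ : Equiv.Perm V} {A : Matrix (Fin n) (Fin n) ℝ}
    {s : Equiv.Perm Bool} (hs : ∀ b, s b = !b)
    (hq : MatEquiv σ A q) : MatEquiv (Equiv.prodCongr σ s) (-A) q' := by
  rintro ⟨i, _ | _⟩
  · simp [(h _).1, (h _).2, hs, hq i, Matrix.mulVec_neg, Matrix.neg_mulVec]
  · simp [(h _).1, (h _).2, hs, hq i, Matrix.neg_mulVec]

theorem Antipodal.sphMotion_iff {n : ℕ} {G : SimpleGraph V} {G' : SimpleGraph (V × Bool)}
    (hG' : ∀ x y : V × Bool, G'.Adj x y ↔ (x.2 = y.2 ∧ G.Adj x.1 y.1))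
    {p q : V → Fin n → ℝ} {p' q' : V × Bool → Fin n → ℝ}
    (hp : Antipodal p p') (hq : Antipodal q q') :
    SphMotion G' p' q' ↔ SphMotion G p q := by
  constructor
  · rintro ⟨h1, h2⟩
    refine ⟨fun i j hij => ?_, fun i => ?_⟩
    · simpa [(hp _).1, (hq _).1] using h1 (i, true) (j, true) ((hG' _ _).2 ⟨rfl, hij⟩)
    · simpa [(hp _).1, (hq _).1] using h2 (i, true)
  · rintro ⟨h1, h2⟩
    refine ⟨?_, ?_⟩
    · rintro ⟨i, b⟩ ⟨j, c⟩ hij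
      obtain ⟨hbc, hij⟩ := (hG' _ _).1 hij
      obtain rfl : b = c := hbc
      cases b
      · simpa [(hp _).2, (hq _).2] using h1 i j hij
      · simpa [(hp _).1, (hq _).1] using h1 i j hij
    · rintro ⟨i, _ | _⟩
      · simpa [(hp _).2, (hq _).2] using h2 i
      · simpa [(hp _).1, (hq _).1] using h2 i

theorem Antipodal.sphTrivial_iff {n : ℕ} {p q : V → Fin n → ℝ} {p' q' : V × Bool → Fin n → ℝ}
    (hp : Antipodal p p') (hq : Antipodal q q') : SphTrivial p' q' ↔ SphTrivial p q := by
  refine exists_congr fun S => and_congr_right fun _ => ⟨fun h i => ?_, fun h => ?_⟩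
  · simpa [(hp _).1, (hq _).1] using h (i, true)
  · rintro ⟨i, _ | _⟩
    · simp [(hp _).2, (hq _).2, h i, Matrix.mulVec_neg]
    · simp [(hp _).1, (hq _).1, h i]

/-- the double cover framework `(G', p')` of a `Γ`-symmetric spherical
framework `(G, p)` on `S²` (with `−I ∉ τ(Γ)`) is `Γ' = Γ × {1,−1}`-symmetric, and
`(G, p)` is forced `Γ`-symmetric infinitesimally rigid iff `(G', p')` is forced
`Γ'`-symmetric infinitesimally rigid. -/
theorem statement_15 {V : Type*} [Fintype V] {Γ : Type*} [Group Γ]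
    (G : SimpleGraph V)
    (θ : Γ →* Equiv.Perm V) (hθ : ∀ γ, IsGraphAut G (θ γ))
    (τ : Γ →* Matrix (Fin 3) (Fin 3) ℝ) (hτ : ∀ γ, (τ γ)ᵀ * τ γ = 1)
    (hni : ∀ γ, τ γ ≠ (-1 : Matrix (Fin 3) (Fin 3) ℝ))
    (p : V → Fin 3 → ℝ) (hfw : IsSphFw p) (hsym : ∀ γ, MatEquiv (θ γ) (τ γ) p)
    (G' : SimpleGraph (V × Bool))
    (hG' : ∀ x y : V × Bool, G'.Adj x y ↔ (x.2 = y.2 ∧ G.Adj x.1 y.1))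
    (p' : V × Bool → Fin 3 → ℝ)
    (hp' : ∀ i : V, p' (i, true) = p i ∧ p' (i, false) = -p i)
    (bswap : Equiv.Perm Bool) (hbswap : ∀ b, bswap b = !b) :
    (IsSphFw p' ∧
      (∀ γ, MatEquiv (Equiv.prodCongr (θ γ) (Equiv.refl Bool)) (τ γ) p') ∧
      (∀ γ, MatEquiv (Equiv.prodCongr (θ γ) bswap) (-(τ γ)) p')) ∧
    (SphForcedRigid G (fun u => ∀ γ, MatEquiv (θ γ) (τ γ) u) p ↔
      SphForcedRigid G'
        (fun u =>
          (∀ γ, MatEquiv (Equiv.prodCongr (θ γ) (Equiv.refl Bool)) (τ γ) u) ∧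
          (∀ γ, MatEquiv (Equiv.prodCongr (θ γ) bswap) (-(τ γ)) u))
        p') := by
  have hp : Antipodal p p' := hp'
  refine ⟨⟨hp.isSphFw hfw, fun γ => hp.matEquiv_refl (hsym γ),
    fun γ => hp.matEquiv_swap hbswap (hsym γ)⟩, fun H q' hmot hs => ?_, fun H q hmot hs => ?_⟩
  · -- The element `(1, -1)` of `Γ × {1, -1}` forces `q'` to be antipodal over its first copy.
    have hq : Antipodal (fun i => q' (i, true)) q' := fun i =>
      ⟨rfl, by simpa [hbswap, Matrix.neg_mulVec] using (hs.2 1 (i, true)).symm⟩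
    exact (hp.sphTrivial_iff hq).2
      (H _ ((hp.sphMotion_iff hG' hq).1 hmot) fun γ i => hs.1 γ (i, true))
  · have hq : Antipodal q (fun x => if x.2 then q x.1 else -q x.1) := fun i => by simp
    exact (hp.sphTrivial_iff hq).1 (H _ ((hp.sphMotion_iff hG' hq).2 hmot)
      ⟨fun γ => hq.matEquiv_refl (hs γ), fun γ => hq.matEquiv_swap hbswap (hs γ)⟩)

end RigidityPaper
end
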